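/- Let β > 0 and let k be an integer with 1 ≤ k ≤ 4. If F ⊂ ℝ⁴ is a bounded set that does not β-span a k-dimensional affine subspace, then there exists a (k−1)-dimensional affine subspace V ⊂ ℝ⁴ such that F is contained in the closed 2β-neighborhood of V, i.e. every point of F has distance at most 2β from V. -/

import Mathlib

open Metric

noncomputable section

abbrev E4 := EuclideanSpace ℝ (Fin 4)

/-- `F` β-spans a `k`-dimensional affine subspace: `F` contains `k+1` points that are
β-linearly independent, i.e. each of them has distance at least `β` from the affine
span of the remaining `k` points. -/
def BetaSpans (F : Set E4) (β : ℝ) (k : ℕ) : Prop :=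
  ∃ p : Fin (k + 1) → E4, (∀ i, p i ∈ F) ∧
    ∀ j, β ≤ Metric.infDist (p j)
      ((affineSpan ℝ (p '' ({j}ᶜ)) : AffineSubspace ℝ E4) : Set E4)

/-!
The squared volume of the simplex with vertices `p`, up to a constant its Cayley–Menger
determinant, is the squared height over the vertex `p j` times a factor that does not depend on
`p j`. If the affine span of `F` has dimension less than `k` there is nothing to prove. Otherwise
fix `c > 1` and choose vertices in `F` whose squared volume is within a factor `c ^ 2` of the
supremum, which is finite and positive. As `F` has no `β`-independent tuple, some height of this
simplex is less than `β`; replacing the corresponding vertex by any other point of `F` increases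
the squared volume by a factor less than `c ^ 2`, so that point lies within `c * β` of the span of
the opposite face.
-/

open scoped Matrix

section Matrix

variable {n R : Type*} [Fintype n] [DecidableEq n] [CommRing R]

lemma det_eq_mul_adjugate_of_mulVec_eq {A : Matrix n n R} {w : n → R} {r : R} {j : n}
    (hw : A *ᵥ w = r • Pi.single j 1) (hwj : w j = 1) : A.det = r * A.adjugate j j := by
  have h := congrFun (congrArg (A.adjugate *ᵥ ·) hw) j
  simpa [Matrix.mulVec_mulVec, Matrix.adjugate_mul, Matrix.smul_mulVec, Matrix.mulVec_smul,
    hwj] using h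

lemma adjugate_apply_self_congr {A B : Matrix n n R} {j : n}
    (h : ∀ i k, i ≠ j → k ≠ j → A i k = B i k) : A.adjugate j j = B.adjugate j j := by
  have hcol : (A.updateRow j (B j))ᵀ.updateRow j (Pi.single j 1) =
      Bᵀ.updateRow j (Pi.single j 1) := by
    ext k i
    by_cases hk : k = j
    · simp [hk]
    · by_cases hi : i = j
      · simp [hk, hi]
      · simp [hk, hi, h i k hi hk]
  calc A.adjugate j j = (A.updateRow j (B j)).adjugate j j := by
        rw [Matrix.adjugate_apply, Matrix.adjugate_apply, Matrix.updateRow_idem]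
    _ = (A.updateRow j (B j))ᵀ.adjugate j j := by
        rw [← Matrix.adjugate_transpose, Matrix.transpose_apply]
    _ = Bᵀ.adjugate j j := by rw [Matrix.adjugate_apply, hcol, ← Matrix.adjugate_apply]
    _ = B.adjugate j j := by rw [← Matrix.adjugate_transpose, Matrix.transpose_apply]

end Matrix

lemma exists_forall_lt_mul_of_bddAbove {α : Type*} {f : α → ℝ} {s : Set α} {c : ℝ} (hc : 1 < c)
    (hf : BddAbove (f '' s)) (hpos : ∃ a ∈ s, 0 < f a) : ∃ a ∈ s, ∀ b ∈ s, f b < c * f a := by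
  obtain ⟨a₀, ha₀, hfa₀⟩ := hpos
  have hsup : 0 < sSup (f '' s) := hfa₀.trans_le (le_csSup hf (Set.mem_image_of_mem f ha₀))
  obtain ⟨_, ⟨a, ha, rfl⟩, hlt⟩ :=
    exists_lt_of_lt_csSup (Set.Nonempty.image f ⟨a₀, ha₀⟩) (div_lt_self hsup hc)
  refine ⟨a, ha, fun b hb => (le_csSup hf (Set.mem_image_of_mem f hb)).trans_lt ?_⟩
  rwa [← div_lt_iff₀' (by linarith)]

section Rank

variable {K V P : Type*} [DivisionRing K] [AddCommGroup V] [Module K V] [AddTorsor V P]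

lemma exists_submodule_ge_rank_eq {W : Submodule K V} {n : ℕ} (hW : Module.rank K W ≤ n)
    (hn : n ≤ Module.rank K V) : ∃ W' ≥ W, Module.rank K W' = n := by
  obtain ⟨s, -, hsW, hs⟩ := exists_linearIndependent K (W : Set V)
  obtain ⟨t, -, hst, ht_span, ht⟩ :=
    exists_linearIndepOn_id_extension hs s.subset_univ
  have hs_card : s.encard ≤ n := by
    rwa [Set.encard, ENat.card, Cardinal.toENat_le_natCast, ← rank_span_set hs, hsW,
      Submodule.span_eq]
  have ht_card : n ≤ t.encard := by
    rwa [Set.encard, ENat.card, Cardinal.natCast_le_toENat, ← rank_span_set ht,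
      show Submodule.span K t = ⊤ from top_le_iff.1 ht_span, rank_top]
  obtain ⟨u, hsu, hut, hu⟩ := Set.exists_superset_subset_encard_eq hst hs_card ht_card
  refine ⟨Submodule.span K u, ?_, ?_⟩
  · rw [← Submodule.span_eq W, ← hsW]
    exact Submodule.span_mono hsu
  · rwa [rank_span_set (ht.mono hut), ← Cardinal.toENat_eq_natCast]

lemma exists_affineSubspace_ge_rank_direction_eq {A : AffineSubspace K P}
    (hA : (A : Set P).Nonempty) {n : ℕ} (hA_rank : Module.rank K A.direction ≤ n)
    (hn : n ≤ Module.rank K V) : ∃ B ≥ A, Module.rank K B.direction = n := by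
  obtain ⟨W, hAW, hW⟩ := exists_submodule_ge_rank_eq hA_rank hn
  obtain ⟨q, hq⟩ := hA
  refine ⟨AffineSubspace.mk' q W, fun x hx => ?_, by rw [AffineSubspace.direction_mk', hW]⟩
  exact AffineSubspace.mem_mk'.2 (hAW (A.vsub_mem_direction hx hq))

lemma exists_affineIndependent_of_le_rank_vectorSpan {s : Set P} (hs : s.Nonempty) {n : ℕ}
    (hn : n ≤ Module.rank K (vectorSpan K s)) :
    ∃ p : Fin (n + 1) → P, (∀ i, p i ∈ s) ∧ AffineIndependent K p := by
  obtain ⟨t, hts, ht_span, ht⟩ := exists_affineIndependent K V s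
  have ht_rank : n ≤ Module.rank K (vectorSpan K t) := by
    rwa [← direction_affineSpan, ht_span, direction_affineSpan]
  have : Nonempty t := by
    rw [Set.nonempty_coe_sort, ← affineSpan_nonempty K, ht_span]
    exact hs.mono (subset_affineSpan K s)
  obtain ⟨f⟩ : Nonempty (Fin (n + 1) ↪ t) := by
    rcases finite_or_infinite t with _ | _
    · have := Fintype.ofFinite t
      have ht_card := finrank_vectorSpan_range_add_one_le K ((↑) : t → P)
      rw [Subtype.range_coe] at ht_card
      have := finiteDimensional_vectorSpan_of_finite K t.toFinite
      rw [← Module.finrank_eq_rank, Nat.cast_le] at ht_rank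
      exact Function.Embedding.nonempty_of_card_le (by rw [Fintype.card_fin]; lia)
    · exact ⟨Fin.valEmbedding.trans (Infinite.natEmbedding t)⟩
  exact ⟨fun i => f i, fun i => hts (f i).2, ht.comp_embedding f⟩

lemma rank_direction_affineSpan_image_compl_le {ι : Type*} [Fintype ι] {n : ℕ}
    (hι : Fintype.card ι = n + 2) (p : ι → P) (j : ι) :
    Module.rank K (affineSpan K (p '' {j}ᶜ)).direction ≤ n := by
  classical
  rw [direction_affineSpan, Set.image_eq_range, ← Module.finrank_eq_rank, Nat.cast_le]
  exact finrank_vectorSpan_range_le K _ (by rw [Fintype.card_compl_set]; simp [hι])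

end Rank

lemma exists_weightedVSub_eq_vsub_of_mem_affineSpan_image_compl {k V P ι : Type*} [Ring k]
    [AddCommGroup V] [Module k V] [AddTorsor V P] [Fintype ι] {p : ι → P} {j : ι} {y : P}
    (hy : y ∈ affineSpan k (p '' {j}ᶜ)) :
    ∃ w : ι → k, w j = 1 ∧ ∑ i, w i = 0 ∧ Finset.univ.weightedVSub p w = p j -ᵥ y := by
  classical
  obtain ⟨s, d, hs, hd, rfl⟩ := eq_affineCombination_of_mem_affineSpan_image hy
  have hj : j ∉ s := fun hjs => hs hjs rfl
  refine ⟨Pi.single j 1 - Set.indicator s d, by simp [hj], ?_, ?_⟩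
  · simp [Finset.sum_indicator_subset d s.subset_univ, hd]
  · rw [← Finset.affineCombination_vsub,
      Finset.affineCombination_indicator_subset _ _ s.subset_univ,
      Finset.affineCombination_piSingle _ _ _ (Finset.mem_univ j)]

/-- The Cayley–Menger matrix of a family of points: the matrix of squared distances, bordered by a
row and a column of ones that carry the index `none`. Up to a factor depending only on the number
of points, its determinant is the squared volume of the simplex with these vertices. -/
def cayleyMengerMatrix {P ι : Type*} [Dist P] (p : ι → P) : Matrix (Option ι) (Option ι) ℝ
  | none, none => 0
  | none, some _ => 1
  | some _, none => 1
  | some i, some j => dist (p i) (p j) ^ 2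

lemma cayleyMengerMatrix_mulVec_none {P ι : Type*} [Dist P] [Fintype ι] (p : ι → P)
    (w : Option ι → ℝ) : (cayleyMengerMatrix p *ᵥ w) none = ∑ i, w (some i) := by
  simp [Matrix.mulVec, dotProduct, cayleyMengerMatrix]

lemma adjugate_cayleyMengerMatrix_update {P ι : Type*} [Dist P] [Fintype ι] [DecidableEq ι]
    (p : ι → P) (j : ι) (x : P) :
    (cayleyMengerMatrix (Function.update p j x)).adjugate (some j) (some j) =
      (cayleyMengerMatrix p).adjugate (some j) (some j) := by
  refine adjugate_apply_self_congr ?_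
  rintro (_ | i) (_ | k) hi hk <;> simp_all [cayleyMengerMatrix]

lemma bddAbove_abs_det_cayleyMengerMatrix {P ι : Type*} [PseudoMetricSpace P] [Fintype ι]
    [DecidableEq ι] {F : Set P} (hF : Bornology.IsBounded F) :
    BddAbove ((fun p : ι → P => |(cayleyMengerMatrix p).det|) '' {p | ∀ i, p i ∈ F}) := by
  refine ⟨_, Set.forall_mem_image.2 fun p hp =>
    Matrix.det_le (abv := AbsoluteValue.abs) (x := max 1 (diam F ^ 2)) ?_⟩
  rintro (_ | i) (_ | k)
  · simp [cayleyMengerMatrix]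
  · simp [cayleyMengerMatrix]
  · simp [cayleyMengerMatrix]
  · have hdist := dist_le_diam_of_mem hF (hp i) (hp k)
    have hdist_sq : dist (p i) (p k) ^ 2 ≤ diam F ^ 2 := by gcongr
    simp [cayleyMengerMatrix, hdist_sq]

/-- Points are `β`-linearly independent if each one has distance at least `β` from the affine span
of the others. -/
def BetaIndependent {V P ι : Type*} [NormedAddCommGroup V] [NormedSpace ℝ V] [MetricSpace P]
    [NormedAddTorsor V P] (β : ℝ) (p : ι → P) : Prop :=
  ∀ j, β ≤ infDist (p j) (affineSpan ℝ (p '' {j}ᶜ))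

section CayleyMenger

variable {V P ι : Type*} [NormedAddCommGroup V] [InnerProductSpace ℝ V] [MetricSpace P]
  [NormedAddTorsor V P] [Fintype ι]

lemma cayleyMengerMatrix_mulVec_some (p : ι → P) (q : P) {w : Option ι → ℝ}
    (hw : ∑ i, w (some i) = 0) (i : ι) :
    (cayleyMengerMatrix p *ᵥ w) (some i) = w none + ∑ l, w (some l) * dist (p l) q ^ 2 -
      2 * inner ℝ (Finset.univ.weightedVSub p (fun l => w (some l))) (p i -ᵥ q) := by
  have hdist (l : ι) : dist (p i) (p l) ^ 2 =
      dist (p l) q ^ 2 - 2 * inner ℝ (p l -ᵥ q) (p i -ᵥ q) + dist (p i) q ^ 2 := by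
    rw [dist_comm (p i), dist_eq_norm_vsub V, dist_eq_norm_vsub V, dist_eq_norm_vsub V,
      ← vsub_sub_vsub_cancel_right (p l) (p i) q, norm_sub_sq_real]
  rw [Finset.weightedVSub_eq_weightedVSubOfPoint_of_sum_eq_zero _ _ _ hw q,
    Finset.weightedVSubOfPoint_apply, sum_inner]
  simp only [Matrix.mulVec, dotProduct, Fintype.sum_option, cayleyMengerMatrix, hdist,
    real_inner_smul_left, Finset.mul_sum, one_mul]
  rw [add_sub_assoc, ← Finset.sum_sub_distrib]
  have hconst : ∑ l, dist (p i) q ^ 2 * w (some l) = 0 := by rw [← Finset.mul_sum, hw, mul_zero]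
  rw [add_right_inj, ← sub_eq_zero, ← Finset.sum_sub_distrib, ← hconst]
  exact Finset.sum_congr rfl fun l _ => by ring

lemma det_cayleyMengerMatrix_ne_zero [DecidableEq ι] [Nonempty ι] {p : ι → P}
    (hp : AffineIndependent ℝ p) : (cayleyMengerMatrix p).det ≠ 0 := by
  intro hdet
  obtain ⟨w, hw_ne, hw⟩ := Matrix.exists_mulVec_eq_zero_iff.2 hdet
  have hw_sum : ∑ i, w (some i) = 0 := by
    rw [← cayleyMengerMatrix_mulVec_none p, hw, Pi.zero_apply]
  obtain ⟨j⟩ := ‹Nonempty ι›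
  set u := Finset.univ.weightedVSub p (fun l => w (some l)) with hu
  have hrow (i : ι) :
      w none + ∑ l, w (some l) * dist (p l) (p j) ^ 2 = 2 * inner ℝ u (p i -ᵥ p j) := by
    rw [← sub_eq_zero, ← cayleyMengerMatrix_mulVec_some p (p j) hw_sum, hw, Pi.zero_apply]
  have hconst : w none + ∑ l, w (some l) * dist (p l) (p j) ^ 2 = 0 := by simpa using hrow j
  have hu_inner (i : ι) : inner ℝ u (p i -ᵥ p j) = 0 := by simpa [hconst] using (hrow i).symm
  have hu_zero : u = 0 := by
    rw [← inner_self_eq_zero (𝕜 := ℝ)]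
    nth_rw 2 [hu]
    rw [Finset.weightedVSub_eq_weightedVSubOfPoint_of_sum_eq_zero _ _ _ hw_sum (p j),
      Finset.weightedVSubOfPoint_apply, inner_sum]
    simp only [real_inner_smul_right, hu_inner, mul_zero, Finset.sum_const_zero]
  have hw_some (i : ι) : w (some i) = 0 :=
    hp Finset.univ (fun l => w (some l)) hw_sum hu_zero i (Finset.mem_univ i)
  refine hw_ne (funext fun o => ?_)
  cases o with
  | none => simpa [hw_some] using hconst
  | some i => exact hw_some i

variable [DecidableEq ι]

lemma det_cayleyMengerMatrix_eq_infDist_sq_mul [Nontrivial ι] (p : ι → P) (j : ι) :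
    (cayleyMengerMatrix p).det = -2 * infDist (p j) (affineSpan ℝ (p '' {j}ᶜ)) ^ 2 *
      (cayleyMengerMatrix p).adjugate (some j) (some j) := by
  obtain ⟨b, hbj⟩ := exists_ne j
  set A := affineSpan ℝ (p '' {j}ᶜ)
  have hmem {i : ι} (hi : i ≠ j) : p i ∈ A := subset_affineSpan ℝ _ (Set.mem_image_of_mem p hi)
  have : Nonempty A := ⟨⟨p b, hmem hbj⟩⟩
  have : FiniteDimensional ℝ A.direction := by
    rw [direction_affineSpan]
    exact finiteDimensional_vectorSpan_of_finite ℝ (Set.toFinite _)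
  let y : P := EuclideanGeometry.orthogonalProjection A (p j)
  have hy : y ∈ A := EuclideanGeometry.orthogonalProjection_mem (p j)
  obtain ⟨v, hvj, hv_sum, hvy⟩ := exists_weightedVSub_eq_vsub_of_mem_affineSpan_image_compl hy
  refine det_eq_mul_adjugate_of_mulVec_eq
    (w := fun o => o.elim (-∑ l, v l * dist (p l) y ^ 2) v) (funext fun o => ?_) hvj
  cases o with
  | none => simpa [cayleyMengerMatrix_mulVec_none] using hv_sum
  | some i =>
    rw [cayleyMengerMatrix_mulVec_some p y hv_sum]
    simp only [Option.elim_none, Option.elim_some, neg_add_cancel, zero_sub]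
    rw [hvy]
    rcases eq_or_ne i j with rfl | hij
    · simp [y, A, ← EuclideanGeometry.dist_orthogonalProjection_eq_infDist, dist_eq_norm_vsub V]
    · have horth : inner ℝ (p j -ᵥ y) (p i -ᵥ y) = 0 :=
        Submodule.inner_left_of_mem_orthogonal (A.vsub_mem_direction (hmem hij) hy)
          (EuclideanGeometry.vsub_orthogonalProjection_mem_direction_orthogonal A (p j))
      simp [horth, hij]

lemma infDist_lt_mul_infDist_of_abs_det_cayleyMengerMatrix_update_lt [Nontrivial ι] {p : ι → P}
    {j : ι} {x : P} {c : ℝ} (hc : 0 ≤ c)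
    (h : |(cayleyMengerMatrix (Function.update p j x)).det| <
      c ^ 2 * |(cayleyMengerMatrix p).det|) :
    infDist x (affineSpan ℝ (p '' {j}ᶜ)) < c * infDist (p j) (affineSpan ℝ (p '' {j}ᶜ)) := by
  have himage : Function.update p j x '' {j}ᶜ = p '' {j}ᶜ :=
    Set.image_congr fun i hi => Function.update_of_ne hi x p
  rw [det_cayleyMengerMatrix_eq_infDist_sq_mul _ j, det_cayleyMengerMatrix_eq_infDist_sq_mul p j,
    adjugate_cayleyMengerMatrix_update, himage, Function.update_self] at h
  simp only [abs_mul, abs_neg, abs_pow, sq_abs, Nat.abs_ofNat] at h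
  refine lt_of_pow_lt_pow_left₀ 2 (mul_nonneg hc infDist_nonneg) ?_
  refine lt_of_mul_lt_mul_right ?_
    (mul_nonneg zero_le_two (abs_nonneg ((cayleyMengerMatrix p).adjugate (some j) (some j))))
  linarith

lemma exists_affineSubspace_infDist_le_of_lt_rank_vectorSpan {F : Set P} {β c : ℝ} {n : ℕ}
    (hF : Bornology.IsBounded F) (hF_ne : F.Nonempty) (hc : 1 < c)
    (hn : n < Module.rank ℝ (vectorSpan ℝ F))
    (h : ¬ ∃ p : Fin (n + 2) → P, (∀ i, p i ∈ F) ∧ BetaIndependent β p) :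
    ∃ A : AffineSubspace ℝ P, (A : Set P).Nonempty ∧ Module.rank ℝ A.direction ≤ n ∧
      ∀ x ∈ F, infDist x A ≤ c * β := by
  have hn' : ((n + 1 : ℕ) : Cardinal) ≤ Module.rank ℝ (vectorSpan ℝ F) := by
    exact_mod_cast Cardinal.add_one_le_of_lt hn
  obtain ⟨p₀, hp₀F, hp₀⟩ := exists_affineIndependent_of_le_rank_vectorSpan hF_ne hn'
  obtain ⟨p, hpF, hp⟩ := exists_forall_lt_mul_of_bddAbove (one_lt_pow₀ hc two_ne_zero)
    (bddAbove_abs_det_cayleyMengerMatrix hF)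
    ⟨p₀, hp₀F, abs_pos.2 (det_cayleyMengerMatrix_ne_zero hp₀)⟩
  obtain ⟨j, hj⟩ : ∃ j, infDist (p j) (affineSpan ℝ (p '' {j}ᶜ)) < β := by
    simpa [BetaIndependent] using fun hβ => h ⟨p, hpF, hβ⟩
  obtain ⟨b, hbj⟩ := exists_ne j
  refine ⟨affineSpan ℝ (p '' {j}ᶜ), ⟨p b, subset_affineSpan ℝ _ (Set.mem_image_of_mem p hbj)⟩,
    rank_direction_affineSpan_image_compl_le (Fintype.card_fin _) p j, fun x hx => ?_⟩
  have hupdate : ∀ i, Function.update p j x i ∈ F :=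
    (Function.forall_update_iff p fun _ y => y ∈ F).2 ⟨hx, fun i _ => hpF i⟩
  calc infDist x (affineSpan ℝ (p '' {j}ᶜ))
      ≤ c * infDist (p j) (affineSpan ℝ (p '' {j}ᶜ)) :=
        (infDist_lt_mul_infDist_of_abs_det_cayleyMengerMatrix_update_lt (by linarith)
          (hp _ hupdate)).le
    _ ≤ c * β := by gcongr

end CayleyMenger

theorem stmt_0_general {V P : Type*} [NormedAddCommGroup V] [InnerProductSpace ℝ V]
    [MetricSpace P] [NormedAddTorsor V P] {F : Set P} {β c : ℝ} {n : ℕ}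
    (hF : Bornology.IsBounded F) (hc : 1 < c) (hn : n ≤ Module.rank ℝ V)
    (h : ¬ ∃ p : Fin (n + 2) → P, (∀ i, p i ∈ F) ∧ BetaIndependent β p) :
    ∃ A : AffineSubspace ℝ P, (A : Set P).Nonempty ∧ Module.rank ℝ A.direction = n ∧
      ∀ x ∈ F, infDist x A ≤ c * β := by
  suffices ∃ A : AffineSubspace ℝ P, (A : Set P).Nonempty ∧ Module.rank ℝ A.direction ≤ n ∧
      ∀ x ∈ F, infDist x A ≤ c * β by
    obtain ⟨A, hA, hA_rank, hFA⟩ := this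
    obtain ⟨B, hAB, hB_rank⟩ := exists_affineSubspace_ge_rank_direction_eq hA hA_rank hn
    exact ⟨B, hA.mono hAB, hB_rank,
      fun x hx => (infDist_le_infDist_of_subset hAB hA).trans (hFA x hx)⟩
  rcases F.eq_empty_or_nonempty with rfl | ⟨x, hx⟩
  · obtain ⟨x⟩ : Nonempty P := inferInstance
    refine ⟨affineSpan ℝ {x}, by simp, ?_, by simp⟩
    rw [direction_affineSpan, vectorSpan_singleton, rank_bot]
    exact zero_le
  rcases le_or_gt (Module.rank ℝ (vectorSpan ℝ F)) n with hF_rank | hF_rank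
  · have hβ : 0 < β := by
      by_contra! hβ
      exact h ⟨fun _ => x, fun _ => hx, fun _ => hβ.trans infDist_nonneg⟩
    refine ⟨affineSpan ℝ F, ⟨x, subset_affineSpan ℝ F hx⟩, by rwa [direction_affineSpan],
      fun y hy => ?_⟩
    rw [infDist_zero_of_mem (subset_affineSpan ℝ F hy)]
    positivity
  · exact exists_affineSubspace_infDist_le_of_lt_rank_vectorSpan hF ⟨x, hx⟩ hc hF_rank h

theorem stmt_0 (β : ℝ) (hβ : 0 < β) (k : ℕ) (hk1 : 1 ≤ k) (hk4 : k ≤ 4)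
    (F : Set E4) (hF : Bornology.IsBounded F) (h : ¬ BetaSpans F β k) :
    ∃ V : AffineSubspace ℝ E4, (V : Set E4).Nonempty ∧
      Module.finrank ℝ V.direction = k - 1 ∧
      ∀ x ∈ F, Metric.infDist x (V : Set E4) ≤ 2 * β := by
  obtain ⟨n, rfl⟩ := Nat.exists_eq_add_of_le' hk1
  have hn : (n : Cardinal) ≤ Module.rank ℝ E4 := by
    rw [← Module.finrank_eq_rank, finrank_euclideanSpace_fin]
    exact_mod_cast (by lia : n ≤ 4)
  obtain ⟨A, hA, hA_rank, hFA⟩ := stmt_0_general hF one_lt_two hn h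
  exact ⟨A, hA, Module.finrank_eq_of_rank_eq hA_rank, hFA⟩
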